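/- Let S = (S, I, O, G, D, h) be a weakly-complete deterministic TFSM with output delays all of whose guards are half-open intervals [u,v) with integers 0 ≤ u < v. Then S has a homing sequence (some timed input sequence homing for S) if and only if the region FSM R(S) has a homing sequence (some input sequence over I_G homing for R(S)). -/

import Mathlib

/-!
The two machines run in lockstep. If `β` is the untimed projection of a timed input sequence `α`,
then every time difference of `α` lies in a refined guard, and a refined guard is either contained in
or disjoint from each half-open guard of the machine; hence the runs of `α` in the TFSM and of `β` in
its region FSM correspond, with the same end states and the same (output, delay) sequences
(`fRun_iff`).

Homing for `M` implies homing for the region FSM: the projection of a homing `α` exists because `α`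
has a run from some state (`exists_projects`), and the timed outputs are a function of `α` and the
(output, delay) sequence.

Conversely, realize `β` by the sequence `stamp ε 0 β` in which the input with guard `[u, v)` comes
exactly `u + ε` time units after its predecessor, where `ε` is positive and `length * ε < 1`. The timestamps then have
distinct fractional parts, and delays are integers, so the fractional part of each timed output
tells which input it answers. The unordered timed outputs therefore determine the (output, delay)
sequence (`timedOf_perm_inj`).
-/

/-- A timed guard: an interval with natural-number endpoints, left-closed, and
either right-open (`rightClosed = false`, i.e. `[lo, hi)`) or right-closed
(`rightClosed = true`, i.e. `[lo, hi]`; point intervals are `[u,u]`). -/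
structure Guard where
  lo : ℕ
  hi : ℕ
  rightClosed : Bool
deriving DecidableEq

/-- Membership of a timestamp in a guard. -/
def GuardMem (g : Guard) (t : ℝ) : Prop :=
  (g.lo : ℝ) ≤ t ∧ (if g.rightClosed then t ≤ (g.hi : ℝ) else t < (g.hi : ℝ))

/-- Guard inclusion (as sets of timestamps). -/
def GuardSub (g g' : Guard) : Prop := ∀ t : ℝ, GuardMem g t → GuardMem g' t

/-- A transition of a TFSM with output delays: source state, input, timed guard,
output, positive integer output delay, destination state. -/
structure TTrans (S I O : Type) where
  src : S
  inp : I
  guard : Guard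
  out : O
  delay : ℕ+
  dst : S

/-- A TFSM with output delays over states `S`, inputs `I`, outputs `O`,
given by its transition relation. -/
abbrev TFSM (S I O : Type) := Set (TTrans S I O)

variable {S I O A B : Type}

/-- Determinism: any two distinct transitions from the same state on the same input
have disjoint guards. -/
def TFSMDeterministic (M : TFSM S I O) : Prop :=
  ∀ tr ∈ M, ∀ tr' ∈ M, tr.src = tr'.src → tr.inp = tr'.inp → tr ≠ tr' →
    ∀ t : ℝ, ¬ (GuardMem tr.guard t ∧ GuardMem tr'.guard t)

/-- A timed input sequence: nonnegative, nondecreasing timestamps. -/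
def IsTimedInputSeq (α : List (I × ℝ)) : Prop :=
  (∀ p ∈ α, 0 ≤ p.2) ∧ List.Chain' (· ≤ ·) (α.map Prod.snd)

/-- `TRunTo M s t0 α trs sf`: starting at state `s` at time `t0`, the timed input
sequence `α` induces the sequence of transitions `trs`, ending at state `sf`. -/
inductive TRunTo (M : TFSM S I O) : S → ℝ → List (I × ℝ) → List (TTrans S I O) → S → Prop
  | nil (s : S) (t0 : ℝ) : TRunTo M s t0 [] [] s
  | cons {s sf : S} {t0 t : ℝ} {i : I} {tr : TTrans S I O}
      {rest : List (I × ℝ)} {trs : List (TTrans S I O)} :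
      tr ∈ M → tr.src = s → tr.inp = i → GuardMem tr.guard (t - t0) →
      TRunTo M tr.dst t rest trs sf →
      TRunTo M s t0 ((i, t) :: rest) (tr :: trs) sf

/-- `α` induces the sequence of transitions `trs` from state `s`. -/
def TInduces (M : TFSM S I O) (s : S) (α : List (I × ℝ)) (trs : List (TTrans S I O)) : Prop :=
  ∃ sf : S, TRunTo M s 0 α trs sf

/-- `Dom(s)`: the timed input sequences inducing at least one sequence of transitions from `s`. -/
def TDom (M : TFSM S I O) (s : S) : Set (List (I × ℝ)) :=
  { α | IsTimedInputSeq α ∧ ∃ trs, TInduces M s α trs }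

/-- `next_state(s, α) = sf` (as a relation, since `next_state` is partial). -/
def TReaches (M : TFSM S I O) (s : S) (α : List (I × ℝ)) (sf : S) : Prop :=
  ∃ trs, TRunTo M s 0 α trs sf

/-- The timed outputs of a run: the `j`-th transition produces its output at time
`t_j + d_j`. -/
def rawOutputs (α : List (I × ℝ)) (trs : List (TTrans S I O)) : List (O × ℝ) :=
  List.zipWith (fun p tr => (tr.out, p.2 + ((tr.delay : ℕ) : ℝ))) α trs

/-- `timed_out(s, α)`: all time-sorted reorderings of the timed outputs of the run of `α` at `s`. -/
def timedOut (M : TFSM S I O) (s : S) (α : List (I × ℝ)) : Set (List (O × ℝ)) :=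
  { β | ∃ trs sf, TRunTo M s 0 α trs sf ∧ List.Perm β (rawOutputs α trs) ∧
        List.Chain' (· ≤ ·) (β.map Prod.snd) }

/-- Homing sequence for a TFSM with output delays. -/
def THoming (M : TFSM S I O) (α : List (I × ℝ)) : Prop :=
  IsTimedInputSeq α ∧ ∀ s1 s2 : S, timedOut M s1 α = timedOut M s2 α →
    ∃ sf : S, TReaches M s1 α sf ∧ TReaches M s2 α sf

/-- Synchronizing sequence for a TFSM with output delays. -/
def TSync (M : TFSM S I O) (α : List (I × ℝ)) : Prop :=
  IsTimedInputSeq α ∧ ∃ sf : S, ∀ s : S, TReaches M s α sf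

/-- A timed input sequence is non-integer if the difference of any two distinct
timestamps is not an integer. -/
def NonInteger (α : List (I × ℝ)) : Prop :=
  ∀ j k : Fin α.length, j ≠ k → ∀ z : ℤ, (α.get j).2 - (α.get k).2 ≠ (z : ℝ)

/-- A transition of an (untimed) FSM. -/
structure FTrans (S A B : Type) where
  src : S
  inp : A
  out : B
  dst : S

/-- An (untimed) FSM given by its transition relation. -/
abbrev UntimedFSM (S A B : Type) := Set (FTrans S A B)

/-- FSM run: input sequence, produced output sequence, final state. -/
inductive FRunTo (T : UntimedFSM S A B) : S → List A → List B → S → Prop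
  | nil (s : S) : FRunTo T s [] [] s
  | cons {s sf : S} {a : A} {rest : List A} {γ : List B} {f : FTrans S A B} :
      f ∈ T → f.src = s → f.inp = a → FRunTo T f.dst rest γ sf →
      FRunTo T s (a :: rest) (f.out :: γ) sf

def FReaches (T : UntimedFSM S A B) (s : S) (β : List A) (sf : S) : Prop :=
  ∃ γ, FRunTo T s β γ sf

/-- `out(s, β)` for an FSM (a set, i.e. a partial value, since the FSM may be partial). -/
def FOut (T : UntimedFSM S A B) (s : S) (β : List A) : Set (List B) :=
  { γ | ∃ sf, FRunTo T s β γ sf }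

def FDeterministic (T : UntimedFSM S A B) : Prop :=
  ∀ f ∈ T, ∀ f' ∈ T, f.src = f'.src → f.inp = f'.inp → f = f'

/-- Completeness of an FSM relative to an input alphabet `A0`. -/
def FCompleteOn (T : UntimedFSM S A B) (A0 : Set A) : Prop :=
  ∀ s : S, ∀ a ∈ A0, ∃ f ∈ T, f.src = s ∧ f.inp = a

/-- Synchronizing sequence for an FSM. -/
def FSync (T : UntimedFSM S A B) (β : List A) : Prop :=
  ∃ sf : S, ∀ s : S, FReaches T s β sf

/-- Homing sequence for an FSM. -/
def FHoming (T : UntimedFSM S A B) (β : List A) : Prop :=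
  ∀ s1 s2 : S, FOut T s1 β = FOut T s2 β →
    ∃ sf : S, FReaches T s1 β sf ∧ FReaches T s2 β sf

/-- The guards appearing on transitions labeled with input `i`. -/
def guardsOf (M : TFSM S I O) (i : I) : Set Guard :=
  { g | ∃ tr ∈ M, tr.inp = i ∧ tr.guard = g }

/-- Boundary points of the guards labeled `i`. -/
def boundaries (M : TFSM S I O) (i : I) : Set ℕ :=
  { p | ∃ g ∈ guardsOf M i, g.lo = p ∨ g.hi = p }

/-- `Ḡ_i`: the half-open intervals determined by consecutive boundary points of `G_i`. -/
def refinedGuards (M : TFSM S I O) (i : I) : Set Guard :=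
  { g | g.rightClosed = false ∧ g.lo ∈ boundaries M i ∧ g.hi ∈ boundaries M i ∧
        g.lo < g.hi ∧ ∀ r ∈ boundaries M i, ¬ (g.lo < r ∧ r < g.hi) }

/-- The abstract input alphabet `I_G = {(i, g) : g ∈ Ḡ_i}`. -/
def absInputs (M : TFSM S I O) : Set (I × Guard) :=
  { p | p.2 ∈ refinedGuards M p.1 }

/-- The region FSM `R(S)` of a TFSM with output delays. -/
def regionFSM (M : TFSM S I O) : UntimedFSM S (I × Guard) (O × ℕ+) :=
  { f | f.inp ∈ absInputs M ∧ ∃ tr ∈ M, tr.src = f.src ∧ tr.inp = f.inp.1 ∧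
        tr.out = f.out.1 ∧ tr.delay = f.out.2 ∧ tr.dst = f.dst ∧ GuardSub f.inp.2 tr.guard }

/-- All guards are half-open intervals `[u, v)` with `u < v`. -/
def HalfOpenGuards (M : TFSM S I O) : Prop :=
  ∀ tr ∈ M, tr.guard.rightClosed = false ∧ tr.guard.lo < tr.guard.hi

/-- Weak completeness: all states have the same domain. -/
def WeaklyComplete (M : TFSM S I O) : Prop :=
  ∀ s s' : S, TDom M s = TDom M s'

/-- `Projects M t0 α β`: `β` is the untimed projection `[α]_{I_G}` of `α`
(relative to previous timestamp `t0`). -/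
inductive Projects (M : TFSM S I O) : ℝ → List (I × ℝ) → List (I × Guard) → Prop
  | nil (t0 : ℝ) : Projects M t0 [] []
  | cons {t0 t : ℝ} {i : I} {g : Guard} {rest : List (I × ℝ)} {brest : List (I × Guard)} :
      g ∈ refinedGuards M i → GuardMem g (t - t0) →
      Projects M t rest brest →
      Projects M t0 ((i, t) :: rest) ((i, g) :: brest)

/-- All guards are point intervals `[u, u]` with `u` a positive integer. -/
def PointIntervals (M : TFSM S I O) : Prop :=
  ∀ tr ∈ M, tr.guard.rightClosed = true ∧ tr.guard.lo = tr.guard.hi ∧ 0 < tr.guard.lo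

/-- The region FSM of a TFSM with only point intervals: abstract inputs are the
(input, guard) pairs appearing on transitions. -/
def pointRegionFSM (M : TFSM S I O) : UntimedFSM S (I × Guard) (O × ℕ+) :=
  { f | ∃ tr ∈ M, tr.src = f.src ∧ (tr.inp, tr.guard) = f.inp ∧
        (tr.out, tr.delay) = f.out ∧ tr.dst = f.dst }

/-- `t(α)`: the last timestamp of `α` (0 for the empty sequence). -/
def tEnd (α : List (I × ℝ)) : ℝ := (α.map Prod.snd).getLastD 0

/-- The number of timed outputs of the run produced at or after time `t(α)`
(counted with multiplicity). -/
noncomputable def tailCount (α : List (I × ℝ)) (trs : List (TTrans S I O)) : ℕ :=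
  ((rawOutputs α trs).filter (fun p => decide (tEnd α ≤ p.2))).length

/-- The timed output tail of a run: the multiset of `(o, τ - t(α))` over timed
outputs `(o, τ)` of the run with `τ ≥ t(α)`. -/
noncomputable def tailOf (α : List (I × ℝ)) (trs : List (TTrans S I O)) : Multiset (O × ℝ) :=
  ↑(((rawOutputs α trs).filter (fun p => decide (tEnd α ≤ p.2))).map
      (fun p => (p.1, p.2 - tEnd α)))

/-- The set of all timed output tails of the TFSM, together with the empty tail. -/
def Tout (M : TFSM S I O) : Set (Multiset (O × ℝ)) :=
  insert 0 { m | ∃ (s : S) (α : List (I × ℝ)) (trs : List (TTrans S I O)) (sf : S),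
    α ∈ TDom M s ∧ TRunTo M s 0 α trs sf ∧ m = tailOf α trs }

/-- The output delay at state `j` of the machine `B_n`. -/
def BnDelay (n : ℕ) (j : Fin n) : ℕ+ :=
  if (j : ℕ) = n - 2 then 3 else if (j : ℕ) = n - 1 then 1 else 2

/-- The transition of `B_n` out of state `j`. -/
def BnTrans (n : ℕ) [NeZero n] (j : Fin n) : TTrans (Fin n) Unit Unit :=
  ⟨j, (), ⟨1, 1, true⟩, (), BnDelay n j, j + 1⟩

/-- The TFSM `B_n` with only point intervals. -/
def Bn (n : ℕ) [NeZero n] : TFSM (Fin n) Unit Unit := Set.range (BnTrans n)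

/-! ### Projections and runs of the region FSM -/

/-- The timed outputs obtained when the inputs of `α` are answered by the (output, delay) pairs
`γ`. -/
def timedOf (α : List (I × ℝ)) (γ : List (O × ℕ+)) : List (O × ℝ) :=
  List.zipWith (fun p q => (q.1, p.2 + ((q.2 : ℕ) : ℝ))) α γ

/-- The (output, delay) label of a transition. -/
def lab (tr : TTrans S I O) : O × ℕ+ := (tr.out, tr.delay)

theorem rawOutputs_eq (α : List (I × ℝ)) (trs : List (TTrans S I O)) :
    rawOutputs α trs = timedOf α (trs.map lab) := by
  simp [rawOutputs, timedOf, List.zipWith_map_right, lab]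

/-- A refined guard that meets a guard of the machine is contained in it. -/
theorem guardSub_of_mem {M : TFSM S I O} (hho : HalfOpenGuards M) {tr : TTrans S I O}
    (htr : tr ∈ M) {g : Guard} (hg : g ∈ refinedGuards M tr.inp) {x : ℝ}
    (hx : GuardMem g x) (hx' : GuardMem tr.guard x) : GuardSub g tr.guard := by
  obtain ⟨hc, -, -, -, hno⟩ := hg
  obtain ⟨hc', -⟩ := hho tr htr
  have hlo := hno tr.guard.lo ⟨_, ⟨tr, htr, rfl, rfl⟩, Or.inl rfl⟩
  have hhi := hno tr.guard.hi ⟨_, ⟨tr, htr, rfl, rfl⟩, Or.inr rfl⟩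
  simp only [GuardMem, hc, hc', Bool.false_eq_true, if_false] at hx hx'
  have h1 : tr.guard.lo < g.hi := by exact_mod_cast hx'.1.trans_lt hx.2
  have h2 : g.lo < tr.guard.hi := by exact_mod_cast hx.1.trans_lt hx'.2
  have h3 : (tr.guard.lo : ℝ) ≤ g.lo := by exact_mod_cast (by omega : tr.guard.lo ≤ g.lo)
  have h4 : (g.hi : ℝ) ≤ tr.guard.hi := by exact_mod_cast (by omega : g.hi ≤ tr.guard.hi)
  intro t ht
  simp only [GuardMem, hc, hc', Bool.false_eq_true, if_false] at ht ⊢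
  exact ⟨h3.trans ht.1, ht.2.trans_le h4⟩

/-- Every time accepted by a transition lies in a refined guard: take the last boundary point at or
before it and the first one after it. -/
theorem exists_refined {M : TFSM S I O} (hho : HalfOpenGuards M) {tr : TTrans S I O}
    (htr : tr ∈ M) {x : ℝ} (hx : GuardMem tr.guard x) :
    ∃ g ∈ refinedGuards M tr.inp, GuardMem g x := by
  classical
  obtain ⟨hc, -⟩ := hho tr htr
  simp only [GuardMem, hc, Bool.false_eq_true, if_false] at hx
  have hx0 : 0 ≤ x := (Nat.cast_nonneg _).trans hx.1
  have hlo : tr.guard.lo ∈ boundaries M tr.inp := ⟨_, ⟨tr, htr, rfl, rfl⟩, Or.inl rfl⟩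
  have hhi : tr.guard.hi ∈ boundaries M tr.inp := ⟨_, ⟨tr, htr, rfl, rfl⟩, Or.inr rfl⟩
  have hle : tr.guard.lo ≤ ⌊x⌋₊ := Nat.le_floor hx.1
  have hlt : ⌊x⌋₊ < tr.guard.hi := (Nat.floor_lt hx0).2 hx.2
  have hex : ∃ r, r ∈ boundaries M tr.inp ∧ ⌊x⌋₊ < r := ⟨_, hhi, hlt⟩
  have ha := Nat.findGreatest_spec (P := (· ∈ boundaries M tr.inp)) hle hlo
  have ha' := Nat.findGreatest_le (P := (· ∈ boundaries M tr.inp)) ⌊x⌋₊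
  have hb := Nat.find_spec hex
  have ha2 : ∀ r ∈ boundaries M tr.inp, r ≤ ⌊x⌋₊ →
      r ≤ Nat.findGreatest (· ∈ boundaries M tr.inp) ⌊x⌋₊ :=
    fun r hr h => Nat.le_findGreatest h hr
  have hb2 : ∀ r ∈ boundaries M tr.inp, ⌊x⌋₊ < r → Nat.find hex ≤ r :=
    fun r hr h => Nat.find_min' hex ⟨hr, h⟩
  generalize Nat.findGreatest (· ∈ boundaries M tr.inp) ⌊x⌋₊ = a at *
  generalize Nat.find hex = b at *
  refine ⟨⟨a, b, false⟩, ⟨rfl, ha, hb.1, by simp only; omega, ?_⟩, ?_⟩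
  · rintro r hr ⟨h1, h2⟩
    simp only at h1 h2
    rcases le_or_gt r ⌊x⌋₊ with h | h
    · have := ha2 r hr h
      omega
    · have := hb2 r hr h
      omega
  · simp only [GuardMem, Bool.false_eq_true, if_false]
    exact ⟨(Nat.le_floor_iff hx0).1 ha', (Nat.floor_lt hx0).1 hb.2⟩

theorem exists_projects {M : TFSM S I O} (hho : HalfOpenGuards M) {s sf : S} {t0 : ℝ}
    {α : List (I × ℝ)} {trs : List (TTrans S I O)} (h : TRunTo M s t0 α trs sf) :
    ∃ β, Projects M t0 α β := by
  induction h with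
  | nil s t0 => exact ⟨[], .nil _⟩
  | cons htr hs hi hg _ ih =>
    obtain ⟨β, hβ⟩ := ih
    obtain ⟨g, hgr, hgm⟩ := exists_refined hho htr hg
    subst hi
    exact ⟨_, .cons hgr hgm hβ⟩

theorem Projects.absInputs {M : TFSM S I O} {t0 : ℝ} {α : List (I × ℝ)} {β : List (I × Guard)}
    (h : Projects M t0 α β) : ∀ a ∈ β, a ∈ absInputs M := by
  induction h with
  | nil => simp
  | cons hg _ _ ih =>
    intro a ha
    rcases List.mem_cons.1 ha with rfl | ha
    · exact hg
    · exact ih a ha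

/-- Runs of a timed input sequence and of its projection in the region FSM correspond. -/
theorem fRun_iff {M : TFSM S I O} (hho : HalfOpenGuards M) {t0 : ℝ} {α : List (I × ℝ)}
    {β : List (I × Guard)} (h : Projects M t0 α β) {s sf : S} {γ : List (O × ℕ+)} :
    FRunTo (regionFSM M) s β γ sf ↔ ∃ trs, TRunTo M s t0 α trs sf ∧ trs.map lab = γ := by
  induction h generalizing s γ with
  | nil t0 =>
    constructor
    · rintro ⟨⟩
      exact ⟨[], .nil _ _, rfl⟩
    · rintro ⟨trs, h, rfl⟩
      cases h
      exact .nil _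
  | @cons t0 t i g rest brest hg hm _ ih =>
    constructor
    · intro hr
      cases hr with
      | @cons _ _ _ _ γ' f hf hs ha hr =>
        obtain ⟨fs, fi, fo, fd⟩ := f
        obtain ⟨-, tr, htr, h1, h2, h3, h4, h5, h6⟩ := hf
        simp only at hs ha h1 h2 h3 h4 h5 h6 hr
        subst ha hs
        obtain ⟨trs, ht, rfl⟩ := ih.1 hr
        subst h5
        exact ⟨tr :: trs, .cons htr h1 h2 (h6 _ hm) ht, by simp [lab, h3, h4]⟩
    · rintro ⟨trs, hr, rfl⟩
      cases hr with
      | @cons _ _ _ _ _ tr _ trs htr hs hi hgm hr =>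
        subst hi
        exact .cons (f := ⟨s, (tr.inp, g), lab tr, tr.dst⟩)
          ⟨hg, tr, htr, hs, rfl, rfl, rfl, rfl, guardSub_of_mem hho htr hg hm hgm⟩ rfl rfl
          (ih.2 ⟨trs, hr, rfl⟩)

theorem fReaches_iff {M : TFSM S I O} (hho : HalfOpenGuards M) {α : List (I × ℝ)}
    {β : List (I × Guard)} (h : Projects M 0 α β) {s sf : S} :
    FReaches (regionFSM M) s β sf ↔ TReaches M s α sf := by
  simp only [FReaches, TReaches, fRun_iff hho h]
  exact ⟨fun ⟨_, trs, ht, _⟩ => ⟨trs, ht⟩, fun ⟨trs, ht⟩ => ⟨_, trs, ht, rfl⟩⟩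

theorem timedOut_eq {M : TFSM S I O} (hho : HalfOpenGuards M) {α : List (I × ℝ)}
    {β : List (I × Guard)} (h : Projects M 0 α β) (s : S) :
    timedOut M s α = {δ | ∃ γ ∈ FOut (regionFSM M) s β, δ.Perm (timedOf α γ) ∧
      List.Chain' (· ≤ ·) (δ.map Prod.snd)} := by
  ext δ
  simp only [timedOut, FOut, fRun_iff hho h, rawOutputs_eq, Set.mem_setOf_eq]
  constructor
  · rintro ⟨trs, sf, h1, h2⟩
    exact ⟨_, ⟨sf, trs, h1, rfl⟩, h2⟩
  · rintro ⟨_, ⟨sf, trs, h1, rfl⟩, h2⟩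
    exact ⟨trs, sf, h1, h2⟩

theorem FRunTo.length_eq {T : UntimedFSM S A B} {s sf : S} {β : List A} {γ : List B}
    (h : FRunTo T s β γ sf) : γ.length = β.length := by
  induction h with
  | nil => rfl
  | cons _ _ _ _ ih => simp [ih]

theorem exists_sorted (l : List (O × ℝ)) :
    ∃ δ : List (O × ℝ), δ.Perm l ∧ List.Chain' (· ≤ ·) (δ.map Prod.snd) := by
  classical
  let r : O × ℝ → O × ℝ → Prop := fun a b => a.2 ≤ b.2
  haveI : Std.Total r := ⟨fun a b => le_total a.2 b.2⟩
  haveI : IsTrans (O × ℝ) r := ⟨fun a b c h h' => le_trans (α := ℝ) h h'⟩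
  refine ⟨l.insertionSort r, List.perm_insertionSort r l, ?_⟩
  have h := List.pairwise_insertionSort r l
  exact (List.pairwise_map.2 h).isChain

/-! ### Realizing an abstract input sequence with distinct fractional parts -/

/-- The timed input sequence realizing `β` from time `t0`: each input comes `ε` after the lower end
of its guard, counted from the previous timestamp. -/
def stamp (ε : ℝ) : ℝ → List (I × Guard) → List (I × ℝ)
  | _, [] => []
  | t0, (i, g) :: rest => (i, t0 + g.lo + ε) :: stamp ε (t0 + g.lo + ε) rest

theorem stamp_length (ε t0 : ℝ) (β : List (I × Guard)) :
    (stamp ε t0 β).length = β.length := by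
  induction β generalizing t0 with
  | nil => rfl
  | cons a β ih => simp [stamp, ih]

/-- Each timestamp exceeds `t0` by a natural number plus `k * ε`, for some `k` between 1 and
the length of `β`. -/
theorem stamp_mem {ε t0 : ℝ} {β : List (I × Guard)} {p : I × ℝ} (hp : p ∈ stamp ε t0 β) :
    ∃ n k : ℕ, 1 ≤ k ∧ k ≤ β.length ∧ p.2 = t0 + n + k * ε := by
  induction β generalizing t0 with
  | nil => simp [stamp] at hp
  | cons a β ih =>
    rcases List.mem_cons.1 hp with rfl | hp
    · exact ⟨a.2.lo, 1, le_rfl, by simp, by simp⟩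
    · obtain ⟨n, k, h1, h2, h3⟩ := ih hp
      refine ⟨a.2.lo + n, k + 1, by omega, by simpa using h2, ?_⟩
      rw [h3]
      push_cast
      ring

theorem stamp_chain {ε : ℝ} (hε : 0 ≤ ε) (t0 : ℝ) (β : List (I × Guard)) :
    List.Chain' (· ≤ ·) (t0 :: (stamp ε t0 β).map Prod.snd) := by
  induction β generalizing t0 with
  | nil => exact List.isChain_singleton _
  | cons a β ih =>
    refine List.isChain_cons_cons.2 ⟨?_, ih _⟩
    have : (0 : ℝ) ≤ a.2.lo := Nat.cast_nonneg _
    linarith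

theorem stamp_timed {ε : ℝ} (hε : 0 ≤ ε) (β : List (I × Guard)) :
    IsTimedInputSeq (stamp ε 0 β) := by
  refine ⟨fun p hp => ?_, (stamp_chain hε 0 β).tail⟩
  obtain ⟨n, k, -, -, h⟩ := stamp_mem hp
  rw [h]
  positivity

theorem stamp_projects {M : TFSM S I O} {ε : ℝ} (hε : 0 ≤ ε) (hε1 : ε < 1) (t0 : ℝ)
    {β : List (I × Guard)} (hβ : ∀ a ∈ β, a ∈ absInputs M) : Projects M t0 (stamp ε t0 β) β := by
  induction β generalizing t0 with
  | nil => exact .nil _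
  | cons a β ih =>
    have ha : a.2 ∈ refinedGuards M a.1 := hβ a (by simp)
    refine .cons ha ?_ (ih _ fun b hb => hβ b (by simp [hb]))
    have h : (a.2.lo : ℝ) + 1 ≤ a.2.hi := by exact_mod_cast ha.2.2.2.1
    simp only [GuardMem, ha.1, Bool.false_eq_true, if_false]
    constructor <;> linarith

/-- With distinct fractional parts of the timestamps, the unordered timed outputs determine the
(output, delay) sequence. -/
theorem timedOf_perm_inj {ε : ℝ} (hε : 0 < ε) (t0 : ℝ) (β : List (I × Guard))
    (hε1 : β.length * ε < 1) {γ γ' : List (O × ℕ+)} (hl : γ.length = β.length)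
    (hl' : γ'.length = β.length)
    (h : (timedOf (stamp ε t0 β) γ).Perm (timedOf (stamp ε t0 β) γ')) : γ = γ' := by
  induction β generalizing t0 γ γ' with
  | nil => simp_all
  | cons a β ih =>
    obtain _ | ⟨q, γ⟩ := γ
    · simp at hl
    obtain _ | ⟨q', γ'⟩ := γ'
    · simp at hl'
    simp only [List.length_cons, add_left_inj] at hl hl'
    have hb : (β.length : ℝ) * ε < 1 := by
      simp only [List.length_cons, Nat.cast_add, Nat.cast_one] at hε1
      linarith
    simp only [stamp, timedOf, List.zipWith_cons_cons] at h
    set t := t0 + (a.2.lo : ℝ) + ε with ht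
    have hmem := h.subset (List.mem_cons_self ..)
    rcases List.mem_cons.1 hmem with heq | hmem
    · have hq : q = q' := by
        have h1 := congrArg Prod.fst heq
        have h2 := congrArg Prod.snd heq
        simp only [add_right_inj, Nat.cast_inj, PNat.coe_inj] at h1 h2
        exact Prod.ext h1 h2
      subst hq
      rw [ih t hb hl hl' h.cons_inv]
    · -- A later answer differs from this one by a non-integer.
      exfalso
      rw [← List.map_uncurry_zip_eq_zipWith] at hmem
      obtain ⟨⟨p, r⟩, hpr, he⟩ := List.mem_map.1 hmem
      obtain ⟨n, k, hk1, hk2, hp⟩ := stamp_mem (List.of_mem_zip hpr).1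
      have h2 := congrArg Prod.snd he
      simp only [Function.uncurry_apply_pair, hp] at h2
      have hk : (k : ℝ) ≤ β.length := by exact_mod_cast hk2
      have hk0 : (1 : ℝ) ≤ k := by exact_mod_cast hk1
      have hpos : 0 < k * ε := by positivity
      have hlt : k * ε < 1 := lt_of_le_of_lt (mul_le_mul_of_nonneg_right hk hε.le) hb
      have e1 : ((n + (r.2 : ℕ) : ℕ) : ℝ) < ((q.2 : ℕ) : ℝ) := by
        push_cast
        linarith
      have e2 : ((q.2 : ℕ) : ℝ) < ((n + (r.2 : ℕ) + 1 : ℕ) : ℝ) := by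
        push_cast
        linarith
      have e1' := Nat.cast_lt.1 e1
      have e2' := Nat.cast_lt.1 e2
      omega

/-! ### The equivalence -/

/-- a weakly-complete deterministic TFSM with half-open guards has a
homing sequence iff its region FSM has a homing sequence (over the abstract input
alphabet `I_G`). -/
theorem stmt13 {S I O : Type} [Fintype S] [Nonempty S] [Fintype I] [Nonempty I]
    [Fintype O] [Nonempty O]
    (M : TFSM S I O) (hfin : Set.Finite M) (hdet : TFSMDeterministic M)
    (hwc : WeaklyComplete M) (hho : HalfOpenGuards M) :
    (∃ α : List (I × ℝ), THoming M α) ↔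
    (∃ β : List (I × Guard), (∀ a ∈ β, a ∈ absInputs M) ∧ FHoming (regionFSM M) β) := by
  constructor
  · rintro ⟨α, -, hα⟩
    obtain ⟨s⟩ := ‹Nonempty S›
    obtain ⟨_, ⟨trs, hrun⟩, -⟩ := hα s s rfl
    obtain ⟨β, hβ⟩ := exists_projects hho hrun
    refine ⟨β, hβ.absInputs, fun s1 s2 h => ?_⟩
    simp only [fReaches_iff hho hβ]
    exact hα s1 s2 (by rw [timedOut_eq hho hβ, timedOut_eq hho hβ, h])
  · rintro ⟨β, hβ, hhom⟩
    have hn : (0 : ℝ) < β.length + 1 := by positivity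
    set ε : ℝ := 1 / (2 * (β.length + 1)) with hεdef
    have hε : 0 < ε := by positivity
    have hε2 : ε * (2 * (β.length + 1)) = 1 := by
      rw [hεdef]
      field_simp
    have hnε : 0 ≤ (β.length : ℝ) * ε := by positivity
    have hε1 : ε < 1 := by nlinarith
    have hlε : β.length * ε < 1 := by nlinarith
    have hP := stamp_projects hε.le hε1 0 hβ
    have key : ∀ s1 s2 : S, timedOut M s1 (stamp ε 0 β) = timedOut M s2 (stamp ε 0 β) →
        FOut (regionFSM M) s1 β ⊆ FOut (regionFSM M) s2 β := by
      intro s1 s2 h γ hγ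
      obtain ⟨δ, hδ, hδs⟩ := exists_sorted (timedOf (stamp ε 0 β) γ)
      rw [timedOut_eq hho hP, timedOut_eq hho hP] at h
      obtain ⟨γ', hγ', hδ', -⟩ := h.subset ⟨γ, hγ, hδ, hδs⟩
      have : γ = γ' := timedOf_perm_inj hε 0 β hlε hγ.choose_spec.length_eq
        hγ'.choose_spec.length_eq (hδ.symm.trans hδ')
      exact this ▸ hγ'
    refine ⟨stamp ε 0 β, stamp_timed hε.le β, fun s1 s2 h => ?_⟩
    simp only [← fReaches_iff hho hP]
    exact hhom s1 s2 (Set.Subset.antisymm (key s1 s2 h) (key s2 s1 h.symm))
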